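/- Let ν ∈ ℂ and let λ, λ' be partitions with λ ∼ν λ' and λ ≠ λ'. Then ν is a nonnegative integer n, and there exists a unique partition κ such that κ ∼n λ and |κ| + κ_1 ≤ n. -/

import Mathlib

/-- A partition (Young diagram): a weakly decreasing function `λ : {1,2,…} → ℕ` with
`λ_i = 0` for all sufficiently large `i`. -/
structure NPartition where
  /-- the entries `λ_1 ≥ λ_2 ≥ ⋯` of the partition -/
  toFun : ℕ+ → ℕ
  antitone' : ∀ ⦃i j : ℕ+⦄, i ≤ j → toFun j ≤ toFun i
  eventually_zero' : ∃ N : ℕ+, ∀ i : ℕ+, N ≤ i → toFun i = 0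

/-- `|λ| = Σ_{i ≥ 1} λ_i`. -/
noncomputable def NPartition.size (l : NPartition) : ℕ := ∑ᶠ i : ℕ+, l.toFun i

/-- The sequence `μ_λ(ν)` with `μ_λ(ν)_0 = ν − |λ|` and `μ_λ(ν)_i = λ_i − i` for `i ≥ 1`. -/
noncomputable def muSeq (ν : ℂ) (l : NPartition) : ℕ → ℂ := fun i =>
  if h : i = 0 then ν - (l.size : ℂ)
  else (l.toFun ⟨i, Nat.pos_of_ne_zero h⟩ : ℂ) - (i : ℂ)

/-- `λ ∼ν λ'`: there is a bijection `f : ℕ → ℕ` with `μ_λ(ν)_i = μ_{λ'}(ν)_{f(i)}` for all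
`i ∈ ℕ`. -/
def nuEquiv (ν : ℂ) (l l' : NPartition) : Prop :=
  ∃ f : ℕ ≃ ℕ, ∀ i : ℕ, muSeq ν l i = muSeq ν l' (f i)

/-!
The terms `λ_i - i`, `i ≥ 1`, of `μ_λ(ν)` are strictly decreasing integers, so in a `ν`-class a
partition is determined by its size, that is, by the term of index `0`. If the class has two
members, the term of index `0` of one is a term of positive index of the other; hence `ν` is an
integer, and no member has a repeated term. A member `κ` of least size then satisfies
`|κ| + κ_1 ≤ ν`: otherwise its term of index `0` lies strictly between two consecutive terms
`κ_k - k` and `κ_{k+1} - (k+1)`, and exchanging it with `κ_k - k` gives a smaller member.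
Conversely, `|κ| + κ_1 ≤ ν` makes the term of index `0` the largest one, so that `κ` has least size.
-/

namespace NPartition

@[ext]
theorem ext {l l' : NPartition} (h : ∀ k, l.toFun k = l'.toFun k) : l = l' := by
  cases l
  cases l'
  congr
  exact funext h

theorem finite_support (l : NPartition) : l.toFun.support.Finite := by
  obtain ⟨N, hN⟩ := l.eventually_zero'
  exact (Set.finite_Iio N).subset fun k hk => not_le.mp fun hNk => hk (hN k hNk)

/-- The integer `λ_k - k`, which is the term of index `k ≥ 1` of `μ_λ(ν)` for every `ν`. -/
def shiftedRow (l : NPartition) (k : ℕ+) : ℤ := l.toFun k - (k : ℕ)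

theorem strictAnti_shiftedRow (l : NPartition) : StrictAnti l.shiftedRow := by
  intro i j hij
  have hrow := l.antitone' hij.le
  have hindex : (i : ℕ) < j := hij
  simp only [shiftedRow]
  lia

theorem shiftedRow_injective : Function.Injective shiftedRow := by
  intro l l' h
  ext k
  have hk := congrFun h k
  simp only [shiftedRow] at hk
  lia

theorem exists_shiftedRow_lt (l : NPartition) (c : ℤ) : ∃ k, l.shiftedRow k < c := by
  obtain ⟨N, hN⟩ := l.eventually_zero'
  refine ⟨N + c.natAbs.succPNat, ?_⟩
  rw [shiftedRow, hN _ (PNat.lt_add_right N _).le, PNat.add_coe, Nat.succPNat_coe]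
  lia

theorem exists_shiftedRow_lt_lt {l : NPartition} {c : ℤ} (hc : ∀ k, l.shiftedRow k ≠ c)
    (h1 : c < l.shiftedRow 1) : ∃ k, l.shiftedRow (k + 1) < c ∧ c < l.shiftedRow k := by
  by_contra! hstep
  have above (k : ℕ+) : c < l.shiftedRow k := by
    induction k using PNat.recOn with
    | one => exact h1
    | succ k ih =>
      exact lt_of_le_of_ne (not_lt.mp fun hlt => (hstep k hlt).not_gt ih) (hc _).symm
  obtain ⟨k, hk⟩ := l.exists_shiftedRow_lt c
  exact hk.not_gt (above k)

/-- The partition obtained from `l` by lowering its `k`-th row to `m`. -/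
def lowerRow (l : NPartition) (k : ℕ+) (m : ℕ) (hm : l.toFun (k + 1) ≤ m)
    (hm' : m ≤ l.toFun k) : NPartition where
  toFun := Function.update l.toFun k m
  antitone' i j hij := by
    rcases eq_or_ne j k with rfl | hj
    · rcases eq_or_ne i j with rfl | hi
      · rfl
      · simpa [hi] using hm'.trans (l.antitone' hij)
    · rcases eq_or_ne i k with rfl | hi
      · simpa [hj] using (l.antitone' (PNat.add_one_le_iff.mpr (hij.lt_of_ne' hj))).trans hm
      · simpa [hi, hj] using l.antitone' hij
  eventually_zero' := by
    obtain ⟨N, hN⟩ := l.eventually_zero'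
    refine ⟨N + k, fun i hi => ?_⟩
    rw [Function.update_of_ne ((PNat.lt_add_left k N).trans_le hi).ne']
    exact hN i ((PNat.lt_add_right N k).le.trans hi)

section lowerRow

variable {l : NPartition} {k : ℕ+} {m : ℕ} (hm : l.toFun (k + 1) ≤ m) (hm' : m ≤ l.toFun k)

theorem lowerRow_toFun_self : (l.lowerRow k m hm hm').toFun k = m :=
  Function.update_self ..

theorem lowerRow_toFun_of_ne {i : ℕ+} (hi : i ≠ k) :
    (l.lowerRow k m hm hm').toFun i = l.toFun i :=
  Function.update_of_ne hi ..

theorem size_lowerRow_add : (l.lowerRow k m hm hm').size + l.toFun k = l.size + m := by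
  have hrest : ∑ᶠ (i) (_ : i ≠ k), (l.lowerRow k m hm hm').toFun i =
      ∑ᶠ (i) (_ : i ≠ k), l.toFun i :=
    finsum_congr fun i => finsum_congr fun hi => lowerRow_toFun_of_ne hm hm' hi
  rw [size, size, ← add_finsum_cond_ne k (finite_support _),
    ← add_finsum_cond_ne k l.finite_support, hrest, lowerRow_toFun_self]
  ring

end lowerRow

end NPartition

open NPartition

theorem muSeq_zero (ν : ℂ) (l : NPartition) : muSeq ν l 0 = ν - l.size :=
  dif_pos rfl

theorem muSeq_pnat (ν : ℂ) (l : NPartition) (k : ℕ+) : muSeq ν l k = l.shiftedRow k := by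
  rw [shiftedRow, Int.cast_sub, Int.cast_natCast, Int.cast_natCast]
  exact dif_neg k.ne_zero

theorem nuEquiv_lowerRow {ν : ℂ} {l : NPartition} {k : ℕ+} {m : ℕ}
    (hm : l.toFun (k + 1) ≤ m) (hm' : m ≤ l.toFun k) (hν : ν - l.size = m - (k : ℕ)) :
    nuEquiv ν (l.lowerRow k m hm hm') l := by
  refine ⟨Equiv.swap 0 k, fun i => ?_⟩
  rcases i.eq_zero_or_pos with rfl | hi
  · have hsize : ((l.lowerRow k m hm hm').size + l.toFun k : ℂ) = l.size + m := by
      exact_mod_cast size_lowerRow_add hm hm'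
    rw [Equiv.swap_apply_left, muSeq_zero, muSeq_pnat, shiftedRow]
    push_cast
    linear_combination hν - hsize
  · lift i to ℕ+ using hi
    rcases eq_or_ne i k with rfl | hik
    · rw [Equiv.swap_apply_right, muSeq_zero, muSeq_pnat, shiftedRow, lowerRow_toFun_self, hν]
      push_cast
      rfl
    · rw [Equiv.swap_apply_of_ne_of_ne i.ne_zero (PNat.coe_injective.ne hik), muSeq_pnat,
        muSeq_pnat, shiftedRow, shiftedRow, lowerRow_toFun_of_ne hm hm' hik]

namespace nuEquiv

theorem refl (ν : ℂ) (l : NPartition) : nuEquiv ν l l :=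
  ⟨Equiv.refl ℕ, fun _ => rfl⟩

variable {ν : ℂ} {l l' l'' : NPartition}

theorem symm (h : nuEquiv ν l l') : nuEquiv ν l' l := by
  obtain ⟨f, hf⟩ := h
  exact ⟨f.symm, fun i => by rw [hf, f.apply_symm_apply]⟩

theorem trans (h : nuEquiv ν l l') (h' : nuEquiv ν l' l'') : nuEquiv ν l l'' := by
  obtain ⟨f, hf⟩ := h
  obtain ⟨g, hg⟩ := h'
  exact ⟨f.trans g, fun i => (hf i).trans (hg (f i))⟩

theorem range_shiftedRow_subset (h : nuEquiv ν l l') (hsize : l.size = l'.size) :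
    Set.range l.shiftedRow ⊆ Set.range l'.shiftedRow := by
  rintro _ ⟨k, rfl⟩
  obtain ⟨f, hf⟩ := h
  suffices ∃ j : ℕ, 0 < j ∧ muSeq ν l k = muSeq ν l' j by
    obtain ⟨j, hj, hkj⟩ := this
    lift j to ℕ+ using hj
    rw [muSeq_pnat, muSeq_pnat] at hkj
    exact ⟨j, by exact_mod_cast hkj.symm⟩
  rcases (f k).eq_zero_or_pos with hk | hk
  · have hindex : f 0 ≠ f k := f.injective.ne k.ne_zero.symm
    refine ⟨f 0, Nat.pos_of_ne_zero (hk ▸ hindex), ?_⟩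
    rw [← hf, hf k, hk, muSeq_zero, muSeq_zero, hsize]
  · exact ⟨f k, hk, hf k⟩

theorem eq_of_size_eq (h : nuEquiv ν l l') (hsize : l.size = l'.size) : l = l' := by
  have hrange : Set.range l.shiftedRow = Set.range l'.shiftedRow :=
    (h.range_shiftedRow_subset hsize).antisymm (h.symm.range_shiftedRow_subset hsize.symm)
  have hmono (κ : NPartition) : StrictMono (OrderDual.toDual ∘ κ.shiftedRow) :=
    κ.strictAnti_shiftedRow.dual_right
  exact shiftedRow_injective (((hmono l).range_inj (hmono l')).mp hrange)

theorem exists_sub_size_eq_shiftedRow (h : nuEquiv ν l l') (hne : l ≠ l') :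
    ∃ k, ν - l.size = l'.shiftedRow k := by
  have hsize : l.size ≠ l'.size := fun hsize => hne (h.eq_of_size_eq hsize)
  obtain ⟨f, hf⟩ := h
  have h0 := hf 0
  rcases (f 0).eq_zero_or_pos with hf0 | hf0
  · rw [hf0, muSeq_zero, muSeq_zero, sub_right_inj] at h0
    exact absurd (by exact_mod_cast h0) hsize
  · lift f 0 to ℕ+ using hf0 with k
    rw [muSeq_zero, muSeq_pnat] at h0
    exact ⟨k, h0⟩

theorem exists_eq_intCast (h : nuEquiv ν l l') (hne : l ≠ l') : ∃ N : ℤ, ν = N := by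
  obtain ⟨k, hk⟩ := h.exists_sub_size_eq_shiftedRow hne
  exact ⟨l'.shiftedRow k + l.size, by push_cast; rw [← hk, sub_add_cancel]⟩

theorem shiftedRow_ne_sub_size (h : nuEquiv ν l l') (hne : l ≠ l') (k : ℕ+) :
    (l.shiftedRow k : ℂ) ≠ ν - l.size := by
  intro hk
  have hsize : l.size ≠ l'.size := fun hsize => hne (h.eq_of_size_eq hsize)
  obtain ⟨f, hf⟩ := h
  rw [← muSeq_pnat ν, ← muSeq_zero] at hk
  have index_pos_of_eq {i : ℕ} (hi : muSeq ν l i = muSeq ν l 0) : 0 < f i := by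
    rw [Nat.pos_iff_ne_zero]
    intro hfi
    rw [hf, hfi, muSeq_zero, muSeq_zero, sub_right_inj] at hi
    exact hsize (by exact_mod_cast hi.symm)
  have hvalue : muSeq ν l' (f k) = muSeq ν l' (f 0) := by rw [← hf, ← hf, hk]
  have hindex : f k ≠ f 0 := f.injective.ne k.ne_zero
  lift f k to ℕ+ using index_pos_of_eq hk with i
  lift f 0 to ℕ+ using index_pos_of_eq rfl with j
  rw [muSeq_pnat, muSeq_pnat, Int.cast_inj] at hvalue
  exact hindex (congrArg _ (l'.strictAnti_shiftedRow.injective hvalue))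

theorem exists_size_lt {N : ℤ} (h : nuEquiv N l l') (hne : l ≠ l')
    (hN : N < l.size + l.toFun 1) : ∃ κ, nuEquiv N κ l ∧ κ.size < l.size := by
  have hc (k : ℕ+) : l.shiftedRow k ≠ N - l.size := by
    exact_mod_cast h.shiftedRow_ne_sub_size hne k
  have h1 : N - l.size < l.shiftedRow 1 := by
    refine lt_of_le_of_ne ?_ (hc 1).symm
    simp only [shiftedRow, PNat.one_coe]
    lia
  obtain ⟨k, hlt, hgt⟩ := exists_shiftedRow_lt_lt hc h1
  simp only [shiftedRow, PNat.add_coe, PNat.one_coe] at hlt hgt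
  obtain ⟨m, hm⟩ : ∃ m : ℕ, N - l.size = m - (k : ℕ) := ⟨(N - l.size + (k : ℕ)).toNat, by lia⟩
  have hle : l.toFun (k + 1) ≤ m := by lia
  have hlt' : m < l.toFun k := by lia
  have hsize := size_lowerRow_add hle hlt'.le
  exact ⟨l.lowerRow k m hle hlt'.le, nuEquiv_lowerRow hle hlt'.le (by exact_mod_cast hm), by lia⟩

theorem size_le_of_size_add_le {N : ℤ} (h : nuEquiv N l l')
    (hN : l.size + l.toFun 1 ≤ N) : l.size ≤ l'.size := by
  rcases eq_or_ne l l' with rfl | hne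
  · rfl
  · obtain ⟨k, hk⟩ := h.symm.exists_sub_size_eq_shiftedRow hne.symm
    have hvalue : N - l'.size = l.shiftedRow k := by exact_mod_cast hk
    have hrow : l.toFun k ≤ l.toFun 1 := l.antitone' one_le
    simp only [shiftedRow] at hvalue
    lia

theorem eq_of_size_add_le {N : ℤ} (h : nuEquiv N l l') (hl : l.size + l.toFun 1 ≤ N)
    (hl' : l'.size + l'.toFun 1 ≤ N) : l = l' :=
  h.eq_of_size_eq ((h.size_le_of_size_add_le hl).antisymm (h.symm.size_le_of_size_add_le hl'))

theorem exists_size_add_le {N : ℤ} (h : nuEquiv N l l') (hne : l ≠ l') :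
    ∃ κ, nuEquiv N κ l ∧ κ.size + κ.toFun 1 ≤ N := by
  obtain ⟨κ, hκ, hmin⟩ :=
    exists_minimalFor_of_wellFoundedLT (nuEquiv N · l) size ⟨l, refl N l⟩
  obtain ⟨κ', hκκ', hne'⟩ : ∃ κ', nuEquiv N κ κ' ∧ κ ≠ κ' := by
    rcases eq_or_ne κ l with rfl | hκl
    · exact ⟨l', h, hne⟩
    · exact ⟨l, hκ, hκl⟩
  refine ⟨κ, hκ, not_lt.mp fun hlt => ?_⟩
  obtain ⟨κ₀, hκ₀, hsize⟩ := hκκ'.exists_size_lt hne' hlt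
  exact hsize.not_ge (hmin (hκ₀.trans hκ) hsize.le)

end nuEquiv

/-- If `λ ∼ν λ'` with `λ ≠ λ'` then `ν` is a nonnegative integer `n`, and there is a unique
partition `κ` with `κ ∼n λ` and `|κ| + κ_1 ≤ n`. -/
theorem exists_nat_and_unique_minimal_of_nontrivial_class (ν : ℂ)
    (l l' : NPartition) (h : nuEquiv ν l l') (hne : l ≠ l') :
    ∃ n : ℕ, ν = (n : ℂ) ∧
      ∃! κ : NPartition, nuEquiv ν κ l ∧ κ.size + κ.toFun 1 ≤ n := by
  obtain ⟨N, rfl⟩ := h.exists_eq_intCast hne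
  obtain ⟨κ, hκ, hle⟩ := h.exists_size_add_le hne
  lift N to ℕ using by lia
  refine ⟨N, Int.cast_natCast N, κ, ⟨hκ, by exact_mod_cast hle⟩, fun κ' ⟨hκ', hle'⟩ => ?_⟩
  exact (hκ'.trans hκ.symm).eq_of_size_add_le (by exact_mod_cast hle') hle
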